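/- If the comma category K = Comma(𝟭_{A₂}, F₁₂) is hereditary, then both A₁ and A₂ are hereditary. -/

import Mathlib

/-!
STATEMENT 11: If the comma category `K = Comma(𝟭 A₂, F₁₂)` is hereditary, then both
`A₁` and `A₂` are hereditary.
-/

open CategoryTheory Limits

universe v₁ v₂ u₁ u₂

/-- A category is hereditary if for every epimorphism `e : E ⟶ X` with `E` injective,
`X` is also injective. -/
def Hereditary (C : Type*) [CategoryTheory.Category C] : Prop :=
  ∀ ⦃E X : C⦄ (e : E ⟶ X), CategoryTheory.Epi e →
    CategoryTheory.Injective E → CategoryTheory.Injective X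

section Helpers

open ZeroObject

variable {A₁ : Type u₁} [Category.{v₁} A₁] [Abelian A₁]
  {A₂ : Type u₂} [Category.{v₂} A₂] [Abelian A₂] (F : A₁ ⥤ A₂)

/-- The object `(0, Z)`. -/
noncomputable abbrev rObj (Z : A₁) : Comma (𝟭 A₂) F :=
  { left := (0 : A₂), right := Z, hom := (0 : (0 : A₂) ⟶ F.obj Z) }

/-- The object `(Z, 0)`. -/
noncomputable abbrev lObj (Z : A₂) : Comma (𝟭 A₂) F :=
  { left := Z, right := (0 : A₁), hom := (0 : Z ⟶ F.obj (0 : A₁)) }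

/-- Morphisms out of `(0, Z)`. -/
noncomputable def rHom {Z : A₁} {Y : Comma (𝟭 A₂) F} (g : Z ⟶ Y.right) : rObj F Z ⟶ Y where
  left := (0 : (0 : A₂) ⟶ Y.left)
  right := g
  w := (isZero_zero A₂).eq_of_src _ _

/-- Morphisms out of `(Z, 0)`. -/
noncomputable def lHom [F.Additive] {Z : A₂} {Y : Comma (𝟭 A₂) F} (g : Z ⟶ Y.left)
    (hg : g ≫ (show Y.left ⟶ F.obj Y.right from Y.hom) = 0) : lObj F Z ⟶ Y where
  left := g
  right := 0
  w := by
    refine Eq.trans hg ?_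
    exact (zero_comp).symm

/-- Morphisms into `(Z, 0)`. -/
noncomputable def toL [F.Additive] {Z : A₂} {Y : Comma (𝟭 A₂) F} (g : Y.left ⟶ Z) :
    Y ⟶ lObj F Z where
  left := g
  right := 0
  w := (F.map_isZero (isZero_zero A₁)).eq_of_tgt _ _

lemma mono_right {X Y : Comma (𝟭 A₂) F} (f : X ⟶ Y) [Mono f] : Mono f.right := by
  constructor
  intro Z g h e
  have : rHom F g = rHom F h := by
    rw [← cancel_mono f]
    apply CommaMorphism.ext
    · exact (isZero_zero A₂).eq_of_src _ _
    · exact e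
  exact congrArg CommaMorphism.right this

lemma mono_left [F.Additive] [PreservesFiniteLimits F]
    {X Y : Comma (𝟭 A₂) F} (f : X ⟶ Y) [Mono f] : Mono f.left := by
  have := mono_right F f
  refine Preadditive.mono_of_cancel_zero _ ?_
  intro Z g e
  have hg : g ≫ (show X.left ⟶ F.obj X.right from X.hom) = 0 := by
    rw [← cancel_mono (F.map f.right)]
    have w : f.left ≫ (show Y.left ⟶ F.obj Y.right from Y.hom) =
      (show X.left ⟶ F.obj X.right from X.hom) ≫ F.map f.right := f.w
    rw [Category.assoc, ← w, reassoc_of% e, zero_comp, zero_comp]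
  have : lHom F g hg = lHom F 0 zero_comp := by
    rw [← cancel_mono f]
    apply CommaMorphism.ext
    · exact e.trans zero_comp.symm
    · rfl
  exact congrArg CommaMorphism.left this

lemma mono_of {X Y : Comma (𝟭 A₂) F} (f : X ⟶ Y) (h₁ : Mono f.left) (h₂ : Mono f.right) :
    Mono f := by
  constructor
  intro Z g h e
  apply CommaMorphism.ext
  · exact (cancel_mono f.left).1 (congrArg CommaMorphism.left e)
  · exact (cancel_mono f.right).1 (congrArg CommaMorphism.right e)

lemma epi_of {X Y : Comma (𝟭 A₂) F} (f : X ⟶ Y) (h₁ : Epi f.left) (h₂ : Epi f.right) :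
    Epi f := by
  constructor
  intro Z g h e
  apply CommaMorphism.ext
  · exact (cancel_epi f.left).1 (congrArg CommaMorphism.left e)
  · exact (cancel_epi f.right).1 (congrArg CommaMorphism.right e)

lemma injective_lObj [F.Additive] [PreservesFiniteLimits F] (E : A₂) [Injective E] :
    Injective (lObj F E) := by
  constructor
  intro X Y g f _
  have := mono_left F f
  refine ⟨toL F (Injective.factorThru (show X.left ⟶ E from g.left) f.left), ?_⟩
  apply CommaMorphism.ext
  · exact Injective.comp_factorThru (show X.left ⟶ E from g.left) f.left
  · exact (isZero_zero A₁).eq_of_tgt _ _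

lemma injective_of_lObj [F.Additive] (X : A₂) (h : Injective (lObj F X)) : Injective X := by
  constructor
  intro A B g f _
  have hm : Mono (toL F (Y := lObj F A) f) :=
    mono_of F _ (by assumption) ⟨fun _ _ _ => (isZero_zero A₁).eq_of_tgt _ _⟩
  obtain ⟨k, hk⟩ := h.factors (toL F (Y := lObj F A) g) (toL F (Y := lObj F A) f)
  exact ⟨k.left, congrArg CommaMorphism.left hk⟩

/-- The object `(F E, X, F e)`. -/
abbrev cObj {E X : A₁} (e : E ⟶ X) : Comma (𝟭 A₂) F :=
  { left := F.obj E, right := X, hom := F.map e }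

lemma injective_cObj (E : A₁) [Injective E] : Injective (cObj F (𝟙 E)) := by
  constructor
  intro X Y g f _
  have := mono_right F f
  let k : Y.right ⟶ E := Injective.factorThru (show X.right ⟶ E from g.right) f.right
  have hk : f.right ≫ k = g.right :=
    Injective.comp_factorThru (show X.right ⟶ E from g.right) f.right
  refine ⟨{ left := (show Y.left ⟶ F.obj Y.right from Y.hom) ≫ F.map k, right := k, w := ?_ }, ?_⟩
  · change ((show Y.left ⟶ F.obj Y.right from Y.hom) ≫ F.map k) ≫ F.map (𝟙 E) = _
    rw [F.map_id, Category.comp_id]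
  · apply CommaMorphism.ext
    · have w : f.left ≫ (show Y.left ⟶ F.obj Y.right from Y.hom) =
        (show X.left ⟶ F.obj X.right from X.hom) ≫ F.map f.right := f.w
      have w' : (show X.left ⟶ F.obj E from g.left) ≫ F.map (𝟙 E) =
        (show X.left ⟶ F.obj X.right from X.hom) ≫ F.map g.right := g.w
      rw [F.map_id, Category.comp_id] at w'
      change f.left ≫ ((show Y.left ⟶ F.obj Y.right from Y.hom) ≫ F.map k) = _
      rw [reassoc_of% w, ← F.map_comp, hk]
      exact w'.symm
    · exact hk

lemma injective_of_cObj {E X : A₁} (e : E ⟶ X) (h : Injective (cObj F e)) : Injective X := by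
  constructor
  intro A B g f _
  have hm : Mono (rHom F (Y := rObj F B) f) :=
    mono_of F _ ⟨fun _ _ _ => (isZero_zero A₂).eq_of_tgt _ _⟩ (by assumption)
  obtain ⟨k, hk⟩ := h.factors (rHom F (Y := cObj F e) g) (rHom F (Y := rObj F B) f)
  exact ⟨k.right, congrArg CommaMorphism.right hk⟩

end Helpers

theorem stmt_11 {A₁ : Type u₁} [Category.{v₁} A₁] [Abelian A₁] [EnoughInjectives A₁]
    {A₂ : Type u₂} [Category.{v₂} A₂] [Abelian A₂] [EnoughInjectives A₂]
    (F : A₁ ⥤ A₂) [F.Additive] [PreservesFiniteLimits F]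
    (hK : Hereditary (Comma (𝟭 A₂) F)) :
    Hereditary A₁ ∧ Hereditary A₂ := by
  refine ⟨fun E X e he hE => ?_, fun E X e he hE => ?_⟩
  · let q : cObj F (𝟙 E) ⟶ cObj F e :=
      { left := 𝟙 (F.obj E), right := e, w := by
          change 𝟙 (F.obj E) ≫ F.map e = F.map (𝟙 E) ≫ F.map e
          rw [F.map_id] }
    have hq : Epi q := epi_of F q (inferInstanceAs (Epi (𝟙 (F.obj E)))) he
    exact injective_of_cObj F e (hK q hq (injective_cObj F E))
  · have hq : Epi (toL F (Y := lObj F E) e) :=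
      epi_of F _ he ⟨fun _ _ _ => (Limits.isZero_zero A₁).eq_of_src _ _⟩
    exact injective_of_lObj F X (hK _ hq (injective_lObj F E))
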